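/- Fix an integer m ≥ 1 and a real l > 0. There exists a constant C > 0, independent of M and k, with the following property: for every integer M ≥ 3, every integer k ≥ 1, every m-times continuously differentiable function y : ℝ → ℝ, and every family of real coefficients (ā_{n,m'}) for 1 ≤ n ≤ 2^{k−1}, 0 ≤ m' ≤ M−1, if Ψ_{k,M−1}(y) = Σ_{n,m'} a_{n,m'} ψ_{n,m'} denotes the Legendre wavelet projection of y (with a_{n,m'} = ∫_0^l y(x) ψ_{n,m'}(x) dx) and y_{k,M−1} = Σ_{n,m'} ā_{n,m'} ψ_{n,m'}, then ‖y − y_{k,M−1}‖_{L²(0,l)} ≤ C (M−1)^{−m} |y|_{H^{0,m,M−1,k}(0,l)} + M^{1/2} 2^{(k−1)/2} (Σ_{n,m'} |a_{n,m'} − ā_{n,m'}|²)^{1/2}. -/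

import Mathlib

/-!
The error splits, cell by cell, into a projection error and a coefficient error. The normalized
Legendre polynomials `p_n` (`nleg`) are orthonormal on `(-1, 1)`, and the wavelets are their
rescaled copies on disjoint cells, so on each cell the squared error is the squared projection
error plus `∑ |a - ā|²` (`integral_sub_sum_sq`). Since `√M 2^{(k-1)/2} ≥ 1`, the coefficient error
is at most the second term of the claim, and only the projection error needs work.

On the reference cell, `p_n` is an eigenvector of `q ↦ (-1)ˢ Dˢ((1 - x²)ˢ Dˢ q)` with eigenvalue
`c_n = (n + s)! / (n - s)!` (`rod_eigen`, which compares Leibniz expansions of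
`(x - 1)ⁿ (x + 1)ⁿ`). Integrating by parts `s` times, with boundary terms killed by the weight
`(1 - x²)ˢ ≤ 1`, the Legendre coefficients of `u` satisfy `∑ c_n a_n² ≤ ‖u⁽ˢ⁾‖²`
(`weighted_bessel`). As `c_n ≥ (M / s)^{2s}` for `n ≥ M ≥ s ≥ 1`, and the `p_n` are complete by
Weierstrass (`exists_parseval`), the squared projection error is at most
`(s / M)^{2s} ‖u⁽ˢ⁾‖²` (`reference_bound`).

A cell is the image of `(-1, 1)` under a map of slope `l / 2ᵏ`, so scaling and summing over the
cells gives the factor `(l / 2ᵏ)^{2s}` (`global_bound`). Taking `s = min m M` matches the lowest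
term of the seminorm; the constant `C = mᵐ (1 + l)ᵐ` works both for `m ≤ M` and for the finitely
many `M < m`.
-/

open intervalIntegral

/-- The `m`-th Legendre polynomial, via Rodrigues' formula. -/
noncomputable def legendreP (m : ℕ) : ℝ → ℝ :=
  fun x => (1 / ((2 : ℝ) ^ m * (Nat.factorial m : ℝ))) *
    iteratedDeriv m (fun y : ℝ => (y ^ 2 - 1) ^ m) x

/-- The Legendre wavelet `ψ_{n,m}` on `[0, l)` at resolution level `k`. -/
noncomputable def legWavelet (l : ℝ) (k n m : ℕ) : ℝ → ℝ :=
  fun x => if ((n : ℝ) - 1) * l / 2 ^ (k - 1) ≤ x ∧ x < (n : ℝ) * l / 2 ^ (k - 1) then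
      (2 : ℝ) ^ ((k : ℝ) / 2) * Real.sqrt ((2 * (m : ℝ) + 1) / (2 * l)) *
        legendreP m (((2 : ℝ) ^ k / l) * x - 2 * (n : ℝ) + 1)
    else 0

/-- The Legendre wavelet coefficient `a_{n,m} = ∫_0^l f ψ_{n,m}`. -/
noncomputable def waveletCoeff (l : ℝ) (k : ℕ) (f : ℝ → ℝ) (n m : ℕ) : ℝ :=
  ∫ x in (0 : ℝ)..l, f x * legWavelet l k n m x

/-- The Legendre wavelet projection `Ψ_{k,M-1}(f)`. -/
noncomputable def waveletProj (l : ℝ) (k M : ℕ) (f : ℝ → ℝ) : ℝ → ℝ :=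
  fun x => ∑ n ∈ Finset.Icc 1 (2 ^ (k - 1)), ∑ m' ∈ Finset.range M,
    waveletCoeff l k f n m' * legWavelet l k n m' x

/-- The seminorm `|f|_{H^{r,m,M-1,k}(0,l)}`. -/
noncomputable def semiNorm (l : ℝ) (r m M k : ℕ) (f : ℝ → ℝ) : ℝ :=
  Real.sqrt (∑ j ∈ Finset.Icc (min m M) m,
    ((2 : ℝ) ^ k) ^ (2 * (r : ℤ) - 2 * (j : ℤ)) *
      ∫ x in (0 : ℝ)..l, (iteratedDeriv j f x) ^ 2)

section

open Polynomial Finset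

/-! ### Legendre polynomials -/

/-- `Dⁿ (X² - 1)ⁿ`, the Legendre polynomial up to the factor `2ⁿ n!`. -/
noncomputable def rod (n : ℕ) : ℝ[X] := derivative^[n] ((X ^ 2 - 1) ^ n)

lemma contDiff_eval (P : ℝ[X]) {n : WithTop ℕ∞} : ContDiff ℝ n fun x => P.eval x := by
  have h := Polynomial.contDiff_aeval (𝕜 := ℝ) P n
  simp only [coe_aeval_eq_eval] at h
  exact h

lemma iteratedDeriv_eval (P : ℝ[X]) (n : ℕ) :
    iteratedDeriv n (fun x => P.eval x) = fun x => (derivative^[n] P).eval x := by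
  induction n with
  | zero => simp
  | succ n ih =>
    rw [iteratedDeriv_succ, ih, Function.iterate_succ_apply']
    ext x
    exact Polynomial.deriv _

lemma legendreP_eq (n : ℕ) (x : ℝ) :
    legendreP n x = 1 / (2 ^ n * (n.factorial : ℝ)) * (rod n).eval x := by
  have h := iteratedDeriv_eval ((X ^ 2 - 1) ^ n) n
  simp only [eval_pow, eval_sub, eval_X, eval_one] at h
  rw [legendreP, h, rod]

lemma sq_sub_one_pow (n : ℕ) :
    ((X ^ 2 - 1 : ℝ[X])) ^ n = (X - C 1) ^ n * (X + C 1) ^ n := by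
  rw [← mul_pow]; congr 1; simp; ring

lemma leibniz_coeff (s k i : ℕ) :
    ((k + i).factorial * (((s + k + i + s).choose (s + k)) * (s + k + i).descFactorial (s + i)
      * (s + k + i).descFactorial (s + k)) : ℝ) =
    (s + k + i + s).factorial * ((k + i).choose k * (s + k + i).descFactorial i
      * (s + k + i).descFactorial k) := by
  have f (a b : ℕ) : ((a + b).descFactorial b : ℝ) = (a + b).factorial / a.factorial := by
    have := Nat.factorial_mul_descFactorial (n := a + b) (k := b) (by omega)
    rw [Nat.add_sub_cancel] at this
    rw [eq_div_iff (by positivity), ← this]; push_cast; ring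
  have h1 := f k (s + i)
  have h2 := f i (s + k)
  have h3 := f (s + k) i
  have h4 := f (s + i) k
  rw [show k + (s + i) = s + k + i by ring] at h1
  rw [show i + (s + k) = s + k + i by ring] at h2
  rw [show s + i + k = s + k + i by ring] at h4
  rw [h1, h2, h3, h4, show s + k + i + s = (s + k) + (s + i) by ring, Nat.cast_add_choose,
    Nat.cast_add_choose]
  field_simp

/-- The two sides are the Leibniz expansions of the derivatives of `(X - 1)ⁿ (X + 1)ⁿ`,
compared term by term. -/
lemma leibniz_identity (s d : ℕ) :
    C (d.factorial : ℝ) * ((X ^ 2 - 1) ^ s * derivative^[s + d + s] ((X ^ 2 - 1 : ℝ[X]) ^ (s + d)))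
      = C ((s + d + s).factorial : ℝ) * derivative^[d] ((X ^ 2 - 1 : ℝ[X]) ^ (s + d)) := by
  simp only [sq_sub_one_pow]
  rw [iterate_derivative_mul, iterate_derivative_mul]
  simp only [iterate_derivative_X_sub_pow, iterate_derivative_X_add_pow]
  rw [show (s + d + s).succ = s + (d + 1) + s by omega, sum_range_add, sum_range_add]
  rw [Finset.sum_eq_zero (s := range s), Finset.sum_eq_zero (s := range s), zero_add, add_zero,
    mul_sum, mul_sum, mul_sum]
  · refine Finset.sum_congr rfl fun k hk => ?_
    obtain ⟨i, rfl⟩ := Nat.exists_eq_add_of_le (Nat.lt_succ_iff.1 (mem_range.1 hk))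
    have hc := congrArg (fun r : ℝ => C r) (leibniz_coeff s k i)
    simp only [map_mul] at hc
    simp only [nsmul_eq_mul, ← map_natCast (C : ℝ →+* ℝ[X])]
    rw [show s + (k + i) + s - (s + k) = s + i by omega, show k + i - k = i by omega,
      show s + (k + i) - (s + i) = k by omega, show s + (k + i) - (s + k) = i by omega,
      show s + (k + i) - i = s + k by omega, show s + (k + i) - k = s + i by omega,
      ← add_assoc]
    linear_combination (X - C 1) ^ (s + k) * (X + C 1) ^ (s + i) * hc
  · intro k hk
    rw [mem_range] at hk
    rw [Nat.descFactorial_eq_zero_iff_lt.2 (show s + d < s + (d + 1) + k by omega)]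
    simp
  · intro k hk
    rw [mem_range] at hk
    rw [Nat.descFactorial_eq_zero_iff_lt.2 (show s + d < s + d + s - k by omega)]
    simp

/-- The Legendre polynomials are eigenvectors of `q ↦ Dˢ ((X² - 1)ˢ Dˢ q)`. -/
lemma rod_eigen (s d : ℕ) :
    derivative^[s] ((X ^ 2 - 1) ^ s * derivative^[s] (rod (s + d))) =
      C ((s + d + s).factorial / d.factorial : ℝ) * rod (s + d) := by
  have h := congrArg (fun q => derivative^[s] q) (leibniz_identity s d)
  simp only [iterate_derivative_C_mul] at h
  have hd : (d.factorial : ℝ) ≠ 0 := by positivity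
  have h2 : (C (d.factorial : ℝ)) * C ((s + d + s).factorial / d.factorial : ℝ)
      = C ((s + d + s).factorial : ℝ) := by
    rw [← C_mul]; congr 1; field_simp
  apply mul_left_cancel₀ (C_ne_zero.2 hd)
  rw [← mul_assoc, h2, rod, ← Function.iterate_add_apply, show s + (s + d) = s + d + s by ring, h,
    ← Function.iterate_add_apply]

lemma eval_iterate_derivative_eq_zero (s j : ℕ) (hj : j < s) (q : ℝ[X]) {x : ℝ}
    (hx : x ^ 2 = 1) : (derivative^[j] ((X ^ 2 - 1) ^ s * q)).eval x = 0 := by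
  have h := pow_sub_dvd_iterate_derivative_of_pow_dvd (p := (X ^ 2 - 1) ^ s * q) j
    (Dvd.intro q rfl : (X ^ 2 - 1 : ℝ[X]) ^ s ∣ _)
  obtain ⟨r, hr⟩ := h
  rw [hr]
  simp [hx, show s - j ≠ 0 by omega]

/-- Repeated integration by parts against a polynomial whose lower derivatives vanish at `±1`. -/
lemma integral_by_parts_iter (s : ℕ) : ∀ (u : ℝ → ℝ), ContDiff ℝ s u → ∀ Q : ℝ[X],
    (∀ j < s, ∀ x : ℝ, x ^ 2 = 1 → (derivative^[j] Q).eval x = 0) →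
    ∫ x in (-1 : ℝ)..1, iteratedDeriv s u x * Q.eval x =
      (-1) ^ s * ∫ x in (-1 : ℝ)..1, u x * (derivative^[s] Q).eval x := by
  induction s with
  | zero => intro u _ Q _; simp
  | succ s ih =>
    intro u hu Q hQ
    have hu' : ContDiff ℝ s (deriv u) := by
      have : ContDiff ℝ ((s : WithTop ℕ∞) + 1) u := by exact_mod_cast hu
      exact (contDiff_succ_iff_deriv.1 this).2.2
    have hd : Differentiable ℝ u := hu.differentiable (by simp)
    rw [iteratedDeriv_succ', ih _ hu' Q fun j hj => hQ j (by omega)]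
    have := intervalIntegral.integral_mul_deriv_eq_deriv_mul (a := -1) (b := 1)
      (u := u) (u' := deriv u) (v := fun x => (derivative^[s] Q).eval x)
      (v' := fun x => (derivative^[s+1] Q).eval x)
      (fun x _ => (hd x).hasDerivAt)
      (fun x _ => by rw [Function.iterate_succ_apply']; exact Polynomial.hasDerivAt _ _)
      (hu'.continuous.intervalIntegrable _ _)
      ((Polynomial.continuous _).intervalIntegrable _ _)
    simp only [hQ s (by omega) 1 (by norm_num), hQ s (by omega) (-1) (by norm_num)] at this
    rw [this, pow_succ]; ring

lemma integral_mul_rod (n : ℕ) (u : ℝ → ℝ) (hu : ContDiff ℝ n u) :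
    ∫ x in (-1 : ℝ)..1, u x * (rod n).eval x =
      (-1) ^ n * ∫ x in (-1 : ℝ)..1, iteratedDeriv n u x * (x ^ 2 - 1) ^ n := by
  have h := integral_by_parts_iter n u hu ((X ^ 2 - 1) ^ n) fun j hj x hx => by
    simpa using eval_iterate_derivative_eq_zero n j hj 1 hx
  simp only [eval_pow, eval_sub, eval_X, eval_one] at h
  rw [h, ← mul_assoc, ← mul_pow]; simp [rod]

lemma natDegree_base (n : ℕ) : ((X ^ 2 - 1 : ℝ[X]) ^ n).natDegree = 2 * n := by
  have : (X ^ 2 - 1 : ℝ[X]).natDegree = 2 := by compute_degree!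
  rw [natDegree_pow, this]; ring

lemma monic_base (n : ℕ) : ((X ^ 2 - 1 : ℝ[X]) ^ n).Monic := by
  apply Monic.pow
  exact monic_X_pow_sub_C 1 two_ne_zero

lemma natDegree_rod (n : ℕ) : (rod n).natDegree = n := by
  apply natDegree_eq_of_le_of_coeff_ne_zero
  · exact (natDegree_iterate_derivative _ _).trans (by rw [natDegree_base]; omega)
  · have := monic_base n
    rw [Monic, leadingCoeff, natDegree_base, two_mul] at this
    rw [rod, coeff_iterate_derivative, this, nsmul_one, Nat.cast_ne_zero,
      ← Nat.pos_iff_ne_zero, Nat.descFactorial_pos]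
    omega

lemma iterate_derivative_base (n : ℕ) :
    derivative^[2 * n] ((X ^ 2 - 1 : ℝ[X]) ^ n) = C ((2 * n).factorial : ℝ) := by
  have h0 : (derivative^[2 * n] ((X ^ 2 - 1 : ℝ[X]) ^ n)).natDegree = 0 := by
    rw [← Nat.le_zero]
    exact (natDegree_iterate_derivative _ _).trans (by rw [natDegree_base]; omega)
  rw [eq_C_of_natDegree_eq_zero h0, coeff_iterate_derivative]
  have : ((X ^ 2 - 1 : ℝ[X]) ^ n).coeff (2 * n) = 1 := by
    have := monic_base n
    rwa [Monic, leadingCoeff, natDegree_base] at this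
  simp [this, Nat.descFactorial_self]

lemma integral_rod_of_lt {i j : ℕ} (h : i < j) :
    ∫ x in (-1 : ℝ)..1, (rod i).eval x * (rod j).eval x = 0 := by
  rw [integral_mul_rod j _ (contDiff_eval _), iteratedDeriv_eval,
    iterate_derivative_eq_zero (by rw [natDegree_rod]; exact h)]
  simp

lemma integral_base (n : ℕ) : ∫ x in (-1 : ℝ)..1, (1 - x ^ 2) ^ n =
    2 * (2 ^ n * (n.factorial : ℝ)) ^ 2 / (2 * n + 1).factorial := by
  induction n with
  | zero => norm_num
  | succ n ih =>
    have h_int (k : ℕ) : IntervalIntegrable (fun x : ℝ => (1 - x ^ 2) ^ k) MeasureTheory.volume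
      (-1) 1 := Continuous.intervalIntegrable (by fun_prop) _ _
    -- integrate the derivative of `x (1 - x²)ⁿ⁺¹`
    have h := intervalIntegral.integral_eq_sub_of_hasDerivAt (a := -1) (b := 1)
      (f := fun x : ℝ => x * (1 - x ^ 2) ^ (n + 1))
      (f' := fun x => (2 * (n + 1) + 1) * (1 - x ^ 2) ^ (n + 1) - 2 * (n + 1) * (1 - x ^ 2) ^ n)
      (fun x _ => by
        have := (hasDerivAt_id x).mul ((((hasDerivAt_id x).pow 2).const_sub 1).pow (n + 1))
        refine this.congr_deriv ?_
        simp; ring)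
      (((h_int _).const_mul _).sub ((h_int _).const_mul _))
    rw [intervalIntegral.integral_sub ((h_int _).const_mul _) ((h_int _).const_mul _),
      intervalIntegral.integral_const_mul, intervalIntegral.integral_const_mul, ih] at h
    have h' : ∫ x in (-1 : ℝ)..1, (1 - x ^ 2) ^ (n + 1) =
      2 * (n + 1) * (2 * (2 ^ n * (n.factorial : ℝ)) ^ 2 / (2 * n + 1).factorial)
        / (2 * (n + 1) + 1) := by
      rw [eq_div_iff (by positivity)]
      norm_num at h
      linarith
    rw [h', show 2 * (n + 1) + 1 = 2 * n + 1 + 1 + 1 by ring, Nat.factorial_succ (2 * n + 1 + 1),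
      Nat.factorial_succ (2 * n + 1), Nat.factorial_succ n]
    push_cast
    field_simp
    ring

lemma integral_rod_sq (n : ℕ) : ∫ x in (-1 : ℝ)..1, (rod n).eval x * (rod n).eval x =
    2 * (2 ^ n * (n.factorial : ℝ)) ^ 2 / (2 * n + 1) := by
  rw [integral_mul_rod n _ (contDiff_eval _), iteratedDeriv_eval, rod,
    ← Function.iterate_add_apply, ← two_mul, iterate_derivative_base]
  have : ∀ x : ℝ, (x ^ 2 - 1) ^ n = (-1) ^ n * (1 - x ^ 2) ^ n := fun x => by
    rw [← mul_pow]; ring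
  simp only [eval_C, this, intervalIntegral.integral_const_mul, integral_base]
  have h1 : ((-1 : ℝ) ^ n) * (-1) ^ n = 1 := by rw [← mul_pow]; simp
  rw [Nat.factorial_succ (2 * n)]
  push_cast
  field_simp
  linear_combination h1

/-- The Legendre polynomial of degree `n`, normalized in `L²(-1, 1)`. -/
noncomputable def nleg (n : ℕ) : ℝ[X] :=
  C (Real.sqrt ((2 * (n : ℝ) + 1) / 2) / (2 ^ n * (n.factorial : ℝ))) * rod n

lemma nleg_eval (n : ℕ) (x : ℝ) :
    (nleg n).eval x = Real.sqrt ((2 * (n : ℝ) + 1) / 2) * legendreP n x := by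
  rw [nleg, legendreP_eq, eval_mul, eval_C]; ring

lemma natDegree_nleg (n : ℕ) : (nleg n).natDegree = n := by
  rw [nleg, natDegree_C_mul (by positivity), natDegree_rod]

lemma nleg_ortho (i j : ℕ) :
    ∫ x in (-1 : ℝ)..1, (nleg i).eval x * (nleg j).eval x = if i = j then 1 else 0 := by
  have h : ∀ x, (nleg i).eval x * (nleg j).eval x =
    (Real.sqrt ((2 * (i : ℝ) + 1) / 2) / (2 ^ i * (i.factorial : ℝ)) *
    (Real.sqrt ((2 * (j : ℝ) + 1) / 2) / (2 ^ j * (j.factorial : ℝ)))) *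
      ((rod i).eval x * (rod j).eval x) := fun x => by simp only [nleg, eval_mul, eval_C]; ring
  simp only [h, intervalIntegral.integral_const_mul]
  split_ifs with hij
  · subst hij
    rw [integral_rod_sq, div_mul_div_comm, Real.mul_self_sqrt (by positivity)]
    field_simp
  · rcases lt_or_gt_of_ne hij with hij | hij
    · rw [integral_rod_of_lt hij, mul_zero]
    · simp only [mul_comm ((rod i).eval _), integral_rod_of_lt hij, mul_zero]

lemma nleg_span (N : ℕ) : ∀ P : ℝ[X], P.degree < N →
    ∃ b : ℕ → ℝ, P = ∑ n ∈ range N, C (b n) * nleg n := by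
  induction N with
  | zero => intro P hP; exact ⟨0, by simpa using hP⟩
  | succ N ih =>
    intro P hP
    have hne : (nleg N).coeff N ≠ 0 := by
      have h0 : nleg N ≠ 0 := fun h0 => by simpa [h0] using nleg_ortho N N
      have := leadingCoeff_ne_zero.2 h0
      rwa [leadingCoeff, natDegree_nleg] at this
    obtain ⟨b, hb⟩ := ih (P - C (P.coeff N / (nleg N).coeff N) * nleg N) (by
      rw [degree_lt_iff_coeff_zero]
      intro m hm
      rcases hm.eq_or_lt with rfl | hlt
      · rw [coeff_sub, coeff_C_mul]; field_simp; ring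
      · rw [coeff_sub, coeff_C_mul, coeff_eq_zero_of_natDegree_lt (p := nleg N) (n := m)
          (by rwa [natDegree_nleg]),
          coeff_eq_zero_of_degree_lt (hP.trans_le (by exact_mod_cast hlt))]
        simp)
    refine ⟨fun n => if n = N then P.coeff N / (nleg N).coeff N else b n, ?_⟩
    rw [sum_range_succ, ← sub_eq_iff_eq_add]
    simp only [if_true]
    rw [hb]
    exact Finset.sum_congr rfl fun n hn => by rw [if_neg (mem_range.1 hn).ne]

/-! ### Approximation on the reference interval `(-1, 1)` -/

lemma integral_mul_sum (g : ℝ → ℝ) (hg : Continuous g) (f : ℕ → ℝ[X]) (b : ℕ → ℝ) (S : Finset ℕ) :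
    ∫ x in (-1 : ℝ)..1, g x * ∑ n ∈ S, b n * (f n).eval x =
      ∑ n ∈ S, b n * ∫ x in (-1 : ℝ)..1, g x * (f n).eval x := by
  simp only [mul_sum]
  rw [intervalIntegral.integral_finsetSum]
  · refine Finset.sum_congr rfl fun n _ => ?_
    rw [← intervalIntegral.integral_const_mul]
    congr 1; ext x; ring
  · intro n _
    exact Continuous.intervalIntegrable (by fun_prop) _ _

lemma integral_sum_mul_sum (e f : ℕ → ℝ[X]) (c b : ℕ → ℝ) (S : Finset ℕ)
    (h : ∀ i ∈ S, ∀ j ∈ S, ∫ x in (-1 : ℝ)..1, (e i).eval x * (f j).eval x =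
      if i = j then c j else 0) :
    ∫ x in (-1 : ℝ)..1, (∑ n ∈ S, b n * (e n).eval x) * ∑ n ∈ S, b n * (f n).eval x =
      ∑ n ∈ S, b n ^ 2 * c n := by
  rw [integral_mul_sum _ (by fun_prop)]
  refine Finset.sum_congr rfl fun n hn => ?_
  simp only [mul_comm (∑ n ∈ S, b n * (e n).eval _)]
  rw [integral_mul_sum _ (by fun_prop)]
  simp only [mul_comm ((f n).eval _)]
  rw [Finset.sum_congr rfl fun i hi => by rw [h i hi n hn]]
  simp [hn]
  ring

lemma integral_sub_sum_sq (u : ℝ → ℝ) (hu : Continuous u) (b : ℕ → ℝ) (S : Finset ℕ) :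
    ∫ x in (-1 : ℝ)..1, (u x - ∑ n ∈ S, b n * (nleg n).eval x) ^ 2 =
      (∫ x in (-1 : ℝ)..1, u x ^ 2) - ∑ n ∈ S, (∫ x in (-1 : ℝ)..1, u x * (nleg n).eval x) ^ 2
        + ∑ n ∈ S, ((∫ x in (-1 : ℝ)..1, u x * (nleg n).eval x) - b n) ^ 2 := by
  have h1 := integral_mul_sum u hu nleg b S
  have h2 := integral_sum_mul_sum nleg nleg (fun _ => 1) b S fun i _ j _ => nleg_ortho i j
  have h : ∀ x, (u x - ∑ n ∈ S, b n * (nleg n).eval x) ^ 2 = u x ^ 2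
      - 2 * (u x * ∑ n ∈ S, b n * (nleg n).eval x)
      + (∑ n ∈ S, b n * (nleg n).eval x) * ∑ n ∈ S, b n * (nleg n).eval x := fun x => by ring
  simp only [h]
  rw [intervalIntegral.integral_add (Continuous.intervalIntegrable (by fun_prop) _ _)
    (Continuous.intervalIntegrable (by fun_prop) _ _),
    intervalIntegral.integral_sub (Continuous.intervalIntegrable (by fun_prop) _ _)
    (Continuous.intervalIntegrable (by fun_prop) _ _),
    intervalIntegral.integral_const_mul, h1, h2, sub_add, sub_add, mul_sum, ← sum_sub_distrib,
    ← sum_sub_distrib]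
  congr 1
  exact Finset.sum_congr rfl fun n _ => by ring

/-- The eigenvalue `(n + s)! / (n - s)!` (for `s ≤ n`), written as a falling factorial. -/
noncomputable def eigv (s n : ℕ) : ℝ := ((n + s).descFactorial (2 * s) : ℝ)

lemma nleg_eigen {s n : ℕ} (h : s ≤ n) :
    derivative^[s] ((X ^ 2 - 1) ^ s * derivative^[s] (nleg n)) = C (eigv s n) * nleg n := by
  obtain ⟨d, rfl⟩ := Nat.exists_eq_add_of_le h
  have he : eigv s (s + d) = ((s + d + s).factorial / d.factorial : ℝ) := by
    have := Nat.factorial_mul_descFactorial (n := s + d + s) (k := 2 * s) (by omega)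
    rw [show s + d + s - 2 * s = d by omega] at this
    rw [eigv, eq_div_iff (by positivity), ← this]; push_cast; ring
  rw [nleg, iterate_derivative_C_mul, mul_left_comm, iterate_derivative_C_mul, rod_eigen, he]
  ring

/-- `(1 - X²)ˢ Dˢ p`: the `s`-th derivative of a Legendre polynomial, times the weight for which
these derivatives are orthogonal. -/
noncomputable def wnleg (s n : ℕ) : ℝ[X] :=
  C ((-1) ^ s) * ((X ^ 2 - 1) ^ s * derivative^[s] (nleg n))

lemma wnleg_eval (s n : ℕ) (x : ℝ) :
    (wnleg s n).eval x = (1 - x ^ 2) ^ s * (derivative^[s] (nleg n)).eval x := by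
  simp only [wnleg, eval_mul, eval_C, eval_pow, eval_sub, eval_X, eval_one]
  rw [← mul_assoc, ← mul_pow]; ring

/-- The weighted derivatives test `u⁽ˢ⁾` to give a multiple of the Legendre coefficient of `u`. -/
lemma integral_wnleg {s n : ℕ} (h : s ≤ n) (u : ℝ → ℝ) (hu : ContDiff ℝ s u) :
    ∫ x in (-1 : ℝ)..1, iteratedDeriv s u x * (wnleg s n).eval x =
      eigv s n * ∫ x in (-1 : ℝ)..1, u x * (nleg n).eval x := by
  rw [integral_by_parts_iter s u hu, wnleg, iterate_derivative_C_mul, nleg_eigen h]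
  · simp only [eval_mul, eval_C, ← intervalIntegral.integral_const_mul]
    congr 1; ext x
    have h1 : ((-1 : ℝ) ^ s) * (-1) ^ s = 1 := by rw [← mul_pow]; simp
    linear_combination (u x * (eigv s n * eval x (nleg n))) * h1
  · intro j hj x hx
    rw [wnleg, iterate_derivative_C_mul, eval_mul, eval_iterate_derivative_eq_zero s j hj _ hx,
      mul_zero]

lemma integral_deriv_wnleg {s i j : ℕ} (h : s ≤ j) :
    ∫ x in (-1 : ℝ)..1, (derivative^[s] (nleg i)).eval x * (wnleg s j).eval x =
      if i = j then eigv s j else 0 := by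
  have := integral_wnleg h (fun x => (nleg i).eval x) (contDiff_eval _)
  rw [iteratedDeriv_eval, nleg_ortho] at this
  rw [this]; simp

/-- Bessel's inequality for `u⁽ˢ⁾` in the weighted space. -/
lemma weighted_bessel (s : ℕ) (u : ℝ → ℝ) (hu : ContDiff ℝ s u) (S : Finset ℕ)
    (hS : ∀ n ∈ S, s ≤ n) :
    ∑ n ∈ S, (∫ x in (-1 : ℝ)..1, u x * (nleg n).eval x) ^ 2 * eigv s n ≤
      ∫ x in (-1 : ℝ)..1, iteratedDeriv s u x ^ 2 := by
  set a : ℕ → ℝ := fun n => ∫ x in (-1 : ℝ)..1, u x * (nleg n).eval x with ha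
  set g := iteratedDeriv s u with hgdef
  have hg : Continuous g := hu.continuous_iteratedDeriv s le_rfl
  have h1 := integral_mul_sum g hg (wnleg s) a S
  have h2 := integral_sum_mul_sum (fun n => derivative^[s] (nleg n)) (wnleg s) (eigv s) a S
    fun i _ j hj => integral_deriv_wnleg (hS j hj)
  have h3 : ∑ n ∈ S, a n * ∫ x in (-1 : ℝ)..1, g x * (wnleg s n).eval x =
      ∑ n ∈ S, a n ^ 2 * eigv s n := Finset.sum_congr rfl fun n hn => by
    rw [hgdef, integral_wnleg (hS n hn) u hu]; ring
  rw [h3] at h1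
  set V : ℝ → ℝ := fun x => ∑ n ∈ S, a n * (derivative^[s] (nleg n)).eval x with hV
  set W : ℝ → ℝ := fun x => ∑ n ∈ S, a n * (wnleg s n).eval x with hW
  have hVc : Continuous V := by fun_prop
  have hWc : Continuous W := by fun_prop
  have hWV : ∀ x, W x = (1 - x ^ 2) ^ s * V x := fun x => by
    simp only [hW, hV, mul_sum, wnleg_eval]
    exact Finset.sum_congr rfl fun n _ => by ring
  have h4 : 0 ≤ ∫ x in (-1 : ℝ)..1, (g x ^ 2 - 2 * (g x * W x) + V x * W x) := by
    apply intervalIntegral.integral_nonneg (by norm_num)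
    intro x hx
    have hw0 : 0 ≤ (1 - x ^ 2) ^ s := pow_nonneg (by nlinarith [hx.1, hx.2]) s
    have hw1 : (1 - x ^ 2) ^ s ≤ 1 := pow_le_one₀ (by nlinarith [hx.1, hx.2]) (by nlinarith)
    rw [hWV]
    set w := (1 - x ^ 2) ^ s
    have : w ^ 2 * V x ^ 2 ≤ w * V x ^ 2 :=
      mul_le_mul_of_nonneg_right (by nlinarith) (sq_nonneg _)
    nlinarith [sq_nonneg (g x - w * V x)]
  rw [intervalIntegral.integral_add (Continuous.intervalIntegrable (by fun_prop) _ _)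
    (Continuous.intervalIntegrable (by fun_prop) _ _),
    intervalIntegral.integral_sub (Continuous.intervalIntegrable (by fun_prop) _ _)
    (Continuous.intervalIntegrable (by fun_prop) _ _),
    intervalIntegral.integral_const_mul, h1, h2] at h4
  linarith

lemma le_eigv {s n M : ℕ} (hs : 1 ≤ s) (hsn : s ≤ n) (hMn : M ≤ n) :
    (M : ℝ) ^ (2 * s) ≤ (s : ℝ) ^ (2 * s) * eigv s n := by
  have h1 := Nat.pow_sub_le_descFactorial (n + s) (2 * s)
  have h2 : M ≤ s * (n + s + 1 - 2 * s) := by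
    obtain ⟨d, rfl⟩ := Nat.exists_eq_add_of_le hsn
    rw [show s + d + s + 1 - 2 * s = d + 1 by omega]
    nlinarith
  have h3 := (Nat.pow_le_pow_left h2 (2 * s)).trans_eq (Nat.mul_pow _ _ _)
  rw [eigv]
  exact_mod_cast h3.trans (Nat.mul_le_mul_left _ h1)

/-- Completeness of the Legendre polynomials: by Weierstrass, some partial expansion of `u`
captures `‖u‖²` up to `ε`. -/
lemma exists_parseval (u : ℝ → ℝ) (hu : Continuous u) (M : ℕ) {ε : ℝ} (hε : 0 < ε) :
    ∃ N, M ≤ N ∧ (∫ x in (-1 : ℝ)..1, u x ^ 2) ≤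
      ∑ n ∈ range N, (∫ x in (-1 : ℝ)..1, u x * (nleg n).eval x) ^ 2 + 2 * ε ^ 2 := by
  obtain ⟨P, hP⟩ := exists_polynomial_near_of_continuousOn (-1) 1 u hu.continuousOn ε hε
  obtain ⟨b, hb⟩ := nleg_span (M + P.natDegree + 1) P
    (degree_le_natDegree.trans_lt (by norm_cast; omega))
  refine ⟨M + P.natDegree + 1, by omega, ?_⟩
  have hev : ∀ x, P.eval x = ∑ n ∈ range (M + P.natDegree + 1), b n * (nleg n).eval x := by
    intro x
    conv_lhs => rw [hb]
    simp [eval_finsetSum]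
  have h1 := integral_sub_sum_sq u hu b (range (M + P.natDegree + 1))
  have h2 : ∫ x in (-1 : ℝ)..1, (u x - P.eval x) ^ 2 ≤ ∫ x in (-1 : ℝ)..1, ε ^ 2 := by
    apply intervalIntegral.integral_mono_on (by norm_num)
      (Continuous.intervalIntegrable (by fun_prop) _ _) (by simp)
    intro x hx
    rw [sq_le_sq, abs_of_pos hε, abs_sub_comm]
    exact (hP x hx).le
  simp only [hev] at h2
  rw [h1] at h2
  have h3 : 0 ≤ ∑ n ∈ range (M + P.natDegree + 1),
      ((∫ x in (-1 : ℝ)..1, u x * (nleg n).eval x) - b n) ^ 2 :=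
    Finset.sum_nonneg fun _ _ => sq_nonneg _
  norm_num at h2
  linarith

/-- The approximation estimate on the reference cell. -/
lemma reference_bound {s M : ℕ} (hs : 1 ≤ s) (hsM : s ≤ M) (u : ℝ → ℝ) (hu : ContDiff ℝ s u)
    (b : ℕ → ℝ) :
    ∫ x in (-1 : ℝ)..1, (u x - ∑ n ∈ range M, b n * (nleg n).eval x) ^ 2 ≤
      ((s : ℝ) / M) ^ (2 * s) * (∫ x in (-1 : ℝ)..1, iteratedDeriv s u x ^ 2)
        + ∑ n ∈ range M, ((∫ x in (-1 : ℝ)..1, u x * (nleg n).eval x) - b n) ^ 2 := by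
  rw [integral_sub_sum_sq u hu.continuous]
  gcongr
  apply le_of_forall_pos_le_add
  intro δ hδ
  obtain ⟨N, hN, h⟩ := exists_parseval u hu.continuous M (ε := Real.sqrt (δ / 2)) (by positivity)
  rw [Real.sq_sqrt (by positivity)] at h
  rw [← sum_range_add_sum_Ico _ hN] at h
  have hB := weighted_bessel s u hu (Ico M N) fun n hn => hsM.trans (mem_Ico.1 hn).1
  have hM : (0 : ℝ) < M := by exact_mod_cast (by omega : 0 < M)
  have : ∑ n ∈ Ico M N, (∫ x in (-1 : ℝ)..1, u x * (nleg n).eval x) ^ 2 ≤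
      ((s : ℝ) / M) ^ (2 * s) * (∫ x in (-1 : ℝ)..1, iteratedDeriv s u x ^ 2) := by
    refine le_trans ?_ (mul_le_mul_of_nonneg_left hB (by positivity))
    rw [mul_sum]
    refine Finset.sum_le_sum fun n hn => ?_
    have hn' := (mem_Ico.1 hn).1
    have h1 := le_eigv hs (hsM.trans hn') hn'
    have h2 : 1 ≤ ((s : ℝ) / M) ^ (2 * s) * eigv s n := by
      rw [div_pow, div_mul_eq_mul_div, le_div_iff₀ (by positivity)]; linarith
    nlinarith [mul_le_mul_of_nonneg_left h2
      (sq_nonneg (∫ x in (-1 : ℝ)..1, u x * (nleg n).eval x))]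
  linarith

/-! ### Scaling to the wavelet cells -/

lemma integral_cells {h : ℝ} (hh : 0 < h) (N : ℕ) (F : ℝ → ℝ) (G : ℕ → ℝ → ℝ)
    (hG : ∀ i < N, Continuous (G i))
    (hFG : ∀ i < N, ∀ x : ℝ, i * h < x → x < (i + 1) * h → F x = G i x) :
    ∫ x in (0 : ℝ)..(N * h), F x = ∑ i ∈ range N, ∫ x in (i * h)..((i + 1) * h), G i x := by
  have hu : ∀ i < N, Set.EqOn (G i) F (Set.uIoo (i * h) ((i + 1) * h)) := fun i hi x hx => by
    rw [Set.uIoo_of_le (by nlinarith)] at hx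
    exact (hFG i hi x hx.1 hx.2).symm
  have h1 := intervalIntegral.sum_integral_adjacent_intervals (f := F)
    (μ := MeasureTheory.volume) (a := fun i : ℕ => i * h) (n := N) fun i hi => by
      push_cast
      exact ((hG i hi).intervalIntegrable _ _).congr_uIoo (hu i hi)
  simp only [Nat.cast_zero, zero_mul] at h1
  rw [← h1]
  refine Finset.sum_congr rfl fun i hi => ?_
  push_cast
  exact (intervalIntegral.integral_congr_uIoo (hu i (mem_range.1 hi))).symm

lemma integral_cell_subst {δ : ℝ} (hδ : 0 < δ) (i : ℕ) (g : ℝ → ℝ) :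
    ∫ x in (i * (2 * δ))..((i + 1) * (2 * δ)), g x =
      δ * ∫ t in (-1 : ℝ)..1, g (δ * t + δ * (2 * i + 1)) := by
  rw [intervalIntegral.integral_comp_mul_add g hδ.ne', smul_eq_mul, mul_inv_cancel_left₀ hδ.ne']
  congr 1 <;> ring

lemma legWavelet_cell {l : ℝ} (hl : 0 < l) {k : ℕ} (hk : 1 ≤ k) (n m i : ℕ) {x : ℝ}
    (h1 : i * (2 * (l / 2 ^ k)) < x) (h2 : x < (i + 1) * (2 * (l / 2 ^ k))) :
    legWavelet l k n m x = if n = i + 1 then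
      Real.sqrt (l / 2 ^ k)⁻¹ * (nleg m).eval (x / (l / 2 ^ k) - (2 * i + 1)) else 0 := by
  have hδ : 0 < l / 2 ^ k := by positivity
  have hd : ∀ c : ℝ, c * l / 2 ^ (k - 1) = c * (2 * (l / 2 ^ k)) := fun c => by
    obtain ⟨j, rfl⟩ := Nat.exists_eq_add_of_le' hk
    rw [Nat.add_sub_cancel, pow_succ]; field_simp
  simp only [legWavelet, hd]
  split_ifs with hc hn hn
  · subst hn
    rw [nleg_eval, ← mul_assoc]
    congr 1
    · rw [Real.rpow_div_two_eq_sqrt _ (by norm_num), Real.rpow_natCast,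
        ← Real.sqrt_sq (show 0 ≤ Real.sqrt 2 ^ k by positivity), ← Real.sqrt_mul (by positivity),
        ← Real.sqrt_mul (by positivity), ← pow_mul, mul_comm k, pow_mul,
        Real.sq_sqrt (by norm_num)]
      congr 1
      field_simp
    · congr 1; push_cast; field_simp; ring
  · exfalso
    rcases Nat.lt_or_gt_of_ne hn with h | h
    · have : (n : ℝ) ≤ i := by exact_mod_cast Nat.lt_succ_iff.1 h
      nlinarith [hc.2]
    · have : (i : ℝ) + 2 ≤ n := by exact_mod_cast h
      nlinarith [hc.1]
  · exfalso
    subst hn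
    apply hc
    push_cast
    exact ⟨by nlinarith, h2⟩
  · rfl

lemma waveletCoeff_eq {l : ℝ} (hl : 0 < l) {k : ℕ} (hk : 1 ≤ k) (y : ℝ → ℝ) (hy : Continuous y)
    (i m : ℕ) (hi : i < 2 ^ (k - 1)) :
    waveletCoeff l k y (i + 1) m = Real.sqrt (l / 2 ^ k) *
      ∫ t in (-1 : ℝ)..1, y (l / 2 ^ k * t + l / 2 ^ k * (2 * i + 1)) * (nleg m).eval t := by
  have hL : ((2 ^ (k - 1) : ℕ) : ℝ) * (2 * (l / 2 ^ k)) = l := by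
    obtain ⟨j, rfl⟩ := Nat.exists_eq_add_of_le' hk
    rw [Nat.add_sub_cancel, pow_succ]; push_cast; field_simp
  set δ := l / 2 ^ k with hδd
  have hδ : 0 < δ := by positivity
  have h := integral_cells (h := 2 * δ) (by positivity) (2 ^ (k - 1))
    (fun x => y x * legWavelet l k (i + 1) m x)
    (fun j x => if j = i then y x * (Real.sqrt δ⁻¹ * (nleg m).eval (x / δ - (2 * i + 1))) else 0)
    (fun j _ => by split_ifs <;> fun_prop)
    (fun j _ x h1 h2 => by
      rw [legWavelet_cell hl hk _ _ j h1 h2]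
      by_cases hji : j = i
      · subst hji; simp only [if_true, hδd]
      · simp [hji, Ne.symm hji])
  rw [hL] at h
  rw [waveletCoeff, h, Finset.sum_eq_single_of_mem i (mem_range.2 hi) fun j _ hj => by simp [hj]]
  simp only [if_true]
  rw [integral_cell_subst hδ, ← intervalIntegral.integral_const_mul,
    ← intervalIntegral.integral_const_mul]
  congr 1; ext t
  rw [show (δ * t + δ * (2 * i + 1)) / δ - (2 * i + 1) = t by field_simp; ring]
  have : δ * Real.sqrt δ⁻¹ = Real.sqrt δ := by
    rw [Real.sqrt_inv, ← div_eq_mul_inv, Real.div_sqrt]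
  rw [← this]; ring

/-- The approximation estimate on one cell, obtained from the reference cell by scaling. -/
lemma cell_bound {δ : ℝ} (hδ : 0 < δ) (i : ℕ) {s M : ℕ} (hs : 1 ≤ s) (hsM : s ≤ M) (y : ℝ → ℝ)
    (hy : ContDiff ℝ s y) (b : ℕ → ℝ) :
    ∫ x in (i * (2 * δ))..((i + 1) * (2 * δ)), (y x - ∑ n ∈ range M,
        b n * (Real.sqrt δ⁻¹ * (nleg n).eval (x / δ - (2 * i + 1)))) ^ 2 ≤
      ((s : ℝ) / M) ^ (2 * s) * δ ^ (2 * s) *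
        (∫ x in (i * (2 * δ))..((i + 1) * (2 * δ)), iteratedDeriv s y x ^ 2)
      + ∑ n ∈ range M, (Real.sqrt δ * (∫ t in (-1 : ℝ)..1,
          y (δ * t + δ * (2 * i + 1)) * (nleg n).eval t) - b n) ^ 2 := by
  set d := δ * (2 * (i : ℝ) + 1) with hd
  have hu : ContDiff ℝ s fun t => y (δ * t + d) := hy.comp (by fun_prop)
  have hder : iteratedDeriv s (fun t => y (δ * t + d)) =
      fun t => δ ^ s * iteratedDeriv s y (δ * t + d) := by
    have h1 := iteratedDeriv_comp_const_mul (n := s) (f := fun z => y (z + d))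
      (hy.comp (by fun_prop)) δ
    rw [iteratedDeriv_comp_add_const] at h1
    exact h1
  have h := reference_bound hs hsM _ hu (fun n => b n * Real.sqrt δ⁻¹)
  simp only [hder, mul_pow, intervalIntegral.integral_const_mul] at h
  rw [integral_cell_subst hδ, integral_cell_subst hδ]
  have hx : ∀ t, (δ * t + d) / δ - (2 * i + 1) = t := fun t => by rw [hd]; field_simp; ring
  simp only [← hd, hx, ← mul_assoc (b _)]
  refine (mul_le_mul_of_nonneg_left h hδ.le).trans_eq ?_
  rw [mul_add, mul_sum]
  congr 1
  · ring
  · refine Finset.sum_congr rfl fun n _ => ?_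
    have h1 : Real.sqrt δ ^ 2 = δ := Real.sq_sqrt hδ.le
    have h2 : Real.sqrt δ * Real.sqrt δ⁻¹ = 1 := by
      rw [Real.sqrt_inv]; exact mul_inv_cancel₀ (Real.sqrt_pos.2 hδ).ne'
    linear_combination (-((∫ t in (-1 : ℝ)..1, y (δ * t + d) * (nleg n).eval t)
      - b n * Real.sqrt δ⁻¹) ^ 2) * h1 + (b n ^ 2 * (Real.sqrt δ * Real.sqrt δ⁻¹ + 1)
      - 2 * b n * Real.sqrt δ * (∫ t in (-1 : ℝ)..1, y (δ * t + d) * (nleg n).eval t)) * h2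

lemma global_bound {l : ℝ} (hl : 0 < l) {k : ℕ} (hk : 1 ≤ k) {s M : ℕ} (hs : 1 ≤ s) (hsM : s ≤ M)
    (y : ℝ → ℝ) (hy : ContDiff ℝ s y) (b : ℕ → ℕ → ℝ) :
    ∫ x in (0 : ℝ)..l, (y x - ∑ n ∈ Finset.Icc (1 : ℕ) (2 ^ (k - 1)), ∑ m' ∈ Finset.range M,
        b n m' * legWavelet l k n m' x) ^ 2 ≤
      ((s : ℝ) / M) ^ (2 * s) * (l / 2 ^ k) ^ (2 * s) *
        (∫ x in (0 : ℝ)..l, iteratedDeriv s y x ^ 2)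
      + ∑ n ∈ Finset.Icc (1 : ℕ) (2 ^ (k - 1)), ∑ m' ∈ Finset.range M,
          |waveletCoeff l k y n m' - b n m'| ^ 2 := by
  have hL : ((2 ^ (k - 1) : ℕ) : ℝ) * (2 * (l / 2 ^ k)) = l := by
    obtain ⟨j, rfl⟩ := Nat.exists_eq_add_of_le' hk
    rw [Nat.add_sub_cancel, pow_succ]; push_cast; field_simp
  set δ := l / 2 ^ k with hδd
  have hδ : 0 < δ := by positivity
  have hsum : ∀ f : ℕ → ℝ, ∑ n ∈ Finset.Icc (1 : ℕ) (2 ^ (k - 1)), f n =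
      ∑ i ∈ range (2 ^ (k - 1)), f (i + 1) := fun f => by
    rw [Finset.range_eq_Ico, Finset.sum_Ico_add' f 0 (2 ^ (k - 1)) 1]
    rfl
  have hyc := hy.continuous
  have h1 := integral_cells (h := 2 * δ) (by positivity) (2 ^ (k - 1))
    (fun x => (y x - ∑ n ∈ Finset.Icc (1 : ℕ) (2 ^ (k - 1)), ∑ m' ∈ Finset.range M,
        b n m' * legWavelet l k n m' x) ^ 2)
    (fun i x => (y x - ∑ n ∈ range M,
        b (i + 1) n * (Real.sqrt δ⁻¹ * (nleg n).eval (x / δ - (2 * i + 1)))) ^ 2)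
    (fun i _ => by fun_prop)
    (fun i hi x h1 h2 => by
      simp only [hsum, legWavelet_cell hl hk _ _ i h1 h2]
      rw [Finset.sum_eq_single_of_mem i (mem_range.2 hi) fun j _ hj => by simp [hj]]
      simp [← hδd])
  have hgc : Continuous (iteratedDeriv s y) := hy.continuous_iteratedDeriv s le_rfl
  have h2 := integral_cells (h := 2 * δ) (by positivity) (2 ^ (k - 1))
    (fun x => iteratedDeriv s y x ^ 2) (fun _ x => iteratedDeriv s y x ^ 2)
    (fun i _ => by fun_prop) (fun _ _ _ _ _ => rfl)
  rw [hL] at h1 h2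
  rw [h1, h2, hsum, mul_sum, ← sum_add_distrib]
  refine Finset.sum_le_sum fun i hi => ?_
  simp only [sq_abs, waveletCoeff_eq hl hk y hyc i _ (mem_range.1 hi)]
  exact cell_bound hδ i hs hsM y hy _

end

/-- (Theorem 2 of the paper.) If `Ψ_{k,M-1}(y)` is the Legendre wavelet
projection of `y` with coefficients `a_{n,m'}` and `y_{k,M-1}` is any wavelet expansion
with coefficients `ā_{n,m'}`, then
`‖y - y_{k,M-1}‖_{L²(0,l)} ≤ C (M-1)^{-m} |y|_{H^{0,m,M-1,k}(0,l)}
  + M^{1/2} 2^{(k-1)/2} ‖A - Ā‖₂`. -/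
theorem stmt_4 (m : ℕ) (hm : 1 ≤ m) (l : ℝ) (hl : 0 < l) :
    ∃ C : ℝ, 0 < C ∧ ∀ M : ℕ, 3 ≤ M → ∀ k : ℕ, 1 ≤ k →
      ∀ y : ℝ → ℝ, ContDiff ℝ m y →
      ∀ abar : ℕ → ℕ → ℝ,
        Real.sqrt (∫ x in (0 : ℝ)..l,
            (y x - ∑ n ∈ Finset.Icc (1 : ℕ) (2 ^ (k - 1)), ∑ m' ∈ Finset.range M,
                abar n m' * legWavelet l k n m' x) ^ 2)
          ≤ C * ((M : ℝ) - 1) ^ (-(m : ℤ)) * semiNorm l 0 m M k y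
            + Real.sqrt (M : ℝ) * (2 : ℝ) ^ (((k : ℝ) - 1) / 2) *
                Real.sqrt (∑ n ∈ Finset.Icc (1 : ℕ) (2 ^ (k - 1)), ∑ m' ∈ Finset.range M,
                  |waveletCoeff l k y n m' - abar n m'| ^ 2) := by
  have hm0 : (0 : ℝ) < m := by exact_mod_cast hm
  refine ⟨m ^ m * (1 + l) ^ m, by positivity, fun M hM k hk y hy abar => ?_⟩
  set s := min m M with hs_def
  have hs : 1 ≤ s := by omega
  have hsm : s ≤ m := min_le_left _ _
  have hM1 : (0 : ℝ) < (M : ℝ) - 1 := by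
    have : (3 : ℝ) ≤ M := by exact_mod_cast hM
    linarith
  have hM0 : (0 : ℝ) < M := by linarith
  have hg := global_bound hl hk hs (min_le_right _ _) y (hy.of_le (by exact_mod_cast hsm)) abar
  set E := ∑ n ∈ Finset.Icc (1 : ℕ) (2 ^ (k - 1)), ∑ m' ∈ Finset.range M,
    |waveletCoeff l k y n m' - abar n m'| ^ 2 with hE
  have hE0 : 0 ≤ E := Finset.sum_nonneg fun _ _ => Finset.sum_nonneg fun _ _ => by positivity
  set B := ∫ x in (0 : ℝ)..l, iteratedDeriv s y x ^ 2 with hB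
  have hInt : ∀ j, 0 ≤ ∫ x in (0 : ℝ)..l, iteratedDeriv j y x ^ 2 := fun j =>
    intervalIntegral.integral_nonneg hl.le fun x _ => sq_nonneg _
  -- the order `j = s` term of the seminorm
  have hsemi : Real.sqrt (((2 : ℝ) ^ k)⁻¹ ^ (2 * s) * B) ≤ semiNorm l 0 m M k y := by
    apply Real.sqrt_le_sqrt
    have hle := Finset.single_le_sum (s := Finset.Icc s m)
      (f := fun j : ℕ => ((2 : ℝ) ^ k) ^ (2 * ((0 : ℕ) : ℤ) - 2 * (j : ℤ)) *
        ∫ x in (0 : ℝ)..l, iteratedDeriv j y x ^ 2)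
      (fun j _ => mul_nonneg (by positivity) (hInt j)) (Finset.mem_Icc.2 ⟨le_rfl, hsm⟩)
    refine le_trans (le_of_eq ?_) hle
    congr 1
    rw [show (2 * ((0 : ℕ) : ℤ) - 2 * (s : ℤ)) = -((2 * s : ℕ) : ℤ) by push_cast; ring, zpow_neg,
      zpow_natCast, inv_pow]
  have hconst : ((s : ℝ) / M) ^ s * l ^ s ≤
      m ^ m * (1 + l) ^ m * ((M : ℝ) - 1) ^ (-(m : ℤ)) := by
    have h1 : l ^ s ≤ (1 + l) ^ m :=
      (pow_le_pow_left₀ hl.le (by linarith) s).trans (pow_le_pow_right₀ (by linarith) hsm)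
    have h2 : ((s : ℝ) / M) ^ s ≤ m ^ m * ((M : ℝ) - 1) ^ (-(m : ℤ)) := by
      rw [zpow_neg, zpow_natCast, ← div_eq_mul_inv, ← div_pow]
      rcases le_total m M with h | h
      · rw [hs_def, min_eq_left h]
        gcongr
        linarith
      · have hMm : (M : ℝ) ≤ m := by exact_mod_cast h
        rw [hs_def, min_eq_right h, div_self hM0.ne', one_pow]
        exact one_le_pow₀ ((one_le_div hM1).2 (by linarith))
    calc _ ≤ (m ^ m * ((M : ℝ) - 1) ^ (-(m : ℤ))) * (1 + l) ^ m := by gcongr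
      _ = _ := by ring
  have hone : 1 ≤ Real.sqrt (M : ℝ) * (2 : ℝ) ^ (((k : ℝ) - 1) / 2) := by
    have hk' : (1 : ℝ) ≤ k := by exact_mod_cast hk
    exact one_le_mul_of_one_le_of_one_le (Real.one_le_sqrt.2 (by linarith))
      (Real.one_le_rpow (by norm_num) (by linarith))
  calc _ ≤ Real.sqrt (((s : ℝ) / M) ^ (2 * s) * (l / 2 ^ k) ^ (2 * s) * B + E) :=
        Real.sqrt_le_sqrt hg
    _ ≤ Real.sqrt (((s : ℝ) / M) ^ (2 * s) * (l / 2 ^ k) ^ (2 * s) * B) + Real.sqrt E := by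
        have hA : 0 ≤ ((s : ℝ) / M) ^ (2 * s) * (l / 2 ^ k) ^ (2 * s) * B :=
          mul_nonneg (by positivity) (hInt s)
        rw [Real.sqrt_le_iff]
        refine ⟨by positivity, ?_⟩
        rw [add_sq, Real.sq_sqrt hA, Real.sq_sqrt hE0]
        nlinarith [mul_nonneg (Real.sqrt_nonneg
          (((s : ℝ) / M) ^ (2 * s) * (l / 2 ^ k) ^ (2 * s) * B)) (Real.sqrt_nonneg E)]
    _ = ((s : ℝ) / M) ^ s * l ^ s * Real.sqrt (((2 : ℝ) ^ k)⁻¹ ^ (2 * s) * B) + Real.sqrt E := by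
        congr 1
        rw [← Real.sqrt_sq (show 0 ≤ ((s : ℝ) / M) ^ s * l ^ s by positivity),
          ← Real.sqrt_mul (by positivity)]
        congr 1
        rw [div_eq_mul_inv l]; ring
    _ ≤ _ := by
        apply add_le_add
        · gcongr
        · exact le_mul_of_one_le_left (Real.sqrt_nonneg _) hone
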